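/- arXiv:1704.03083 — 4 statements merged into one kernel-verified Lean document; each statement's English description precedes it below -/
import Mathlib

section
/- For every finite group G, S(G) ≥ |G|, i.e., the sum over all subgroups H of G of the number of elements of H whose order equals the exponent of H is at least the order of G. -/
/-- `phiG G` is the number of elements of `G` whose order equals the exponent of `G`. -/
noncomputable def phiG (G : Type*) [Group G] : ℕ :=
  Nat.card {a : G // orderOf a = Monoid.exponent G}

/-- `SG G` is the sum of `phiG H` over all subgroups `H` of `G`. -/
noncomputable def SG (G : Type*) [Group G] : ℕ :=
  ∑ᶠ H : Subgroup G, phiG H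

section Generators

variable {G : Type*} [Group G]

theorem exponent_zpowers (g : G) : Monoid.exponent (Subgroup.zpowers g) = orderOf g := by
  rw [IsCyclic.exponent_eq_card, Nat.card_zpowers]

theorem card_zpowers_eq_le_phiG (H : Subgroup G) [Finite H] :
    Nat.card {g : G // Subgroup.zpowers g = H} ≤ phiG H := by
  have mem_of_zpowers_eq {g : G} (hg : Subgroup.zpowers g = H) : g ∈ H :=
    hg ▸ Subgroup.mem_zpowers g
  have orderOf_eq_exponent {g : G} (hg : Subgroup.zpowers g = H) :
      orderOf (⟨g, mem_of_zpowers_eq hg⟩ : H) = Monoid.exponent H := by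
    rw [Subgroup.orderOf_mk, ← exponent_zpowers, hg]
  refine Nat.card_le_card_of_injective
    (fun g ↦ ⟨⟨g, mem_of_zpowers_eq g.2⟩, orderOf_eq_exponent g.2⟩) fun g h hgh ↦ ?_
  simpa only [Subtype.ext_iff] using hgh

end Generators

theorem S_ge_card (G : Type*) [Group G] [Fintype G] : SG G ≥ Nat.card G := by
  have : Fintype (Subgroup G) := Fintype.ofFinite _
  calc
    Nat.card G = Nat.card (Σ H : Subgroup G, {g : G // Subgroup.zpowers g = H}) :=
      Nat.card_congr (Equiv.sigmaFiberEquiv Subgroup.zpowers).symm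
    _ = ∑ H : Subgroup G, Nat.card {g : G // Subgroup.zpowers g = H} := Nat.card_sigma
    _ ≤ ∑ H : Subgroup G, phiG H := Finset.sum_le_sum fun H _ ↦ card_zpowers_eq_le_phiG H
    _ = SG G := (finsum_eq_sum_of_fintype _).symm
end

section
/- For every finite nilpotent group G, S(G) ≥ |G|, and equality S(G) = |G| holds if and only if G is cyclic. -/
/-!
`SG G` counts the pairs `(H, a)` with `a ∈ H` of order `exp H`. Sending `a` to `(⟨a⟩, a)` embeds
`G` into these pairs, and the embedding is onto exactly when every subgroup containing an element
of order its own exponent is cyclic. A nilpotent group is a product of `p`-groups, hence itself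
contains such an element, so the criterion applied to `H = G` forces `G` to be cyclic.
-/

/-- The exponent of `G` is the order of some element of `G`; for finite `G` this says `φ(G) ≠ 0`. -/
def ExponentAttained (G : Type*) [Monoid G] : Prop :=
  ∃ a : G, orderOf a = Monoid.exponent G

theorem ExponentAttained.of_mulEquiv {M N : Type*} [Monoid M] [Monoid N]
    (h : ExponentAttained M) (e : M ≃* N) : ExponentAttained N := by
  obtain ⟨a, ha⟩ := h
  exact ⟨e a, by rw [e.orderOf_eq, ha, Monoid.exponent_eq_of_mulEquiv e]⟩

theorem ExponentAttained.pi {ι : Type*} [Finite ι] {M : ι → Type*} [∀ i, Monoid (M i)]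
    (h : ∀ i, ExponentAttained (M i)) : ExponentAttained (∀ i, M i) := by
  have := Fintype.ofFinite ι
  choose a ha using h
  exact ⟨a, by simp only [Pi.orderOf, Monoid.exponent_pi, ha]⟩

theorem exponentAttained_of_isPGroup {p : ℕ} [Fact p.Prime] {P : Type*} [Group P] [Finite P]
    (hP : IsPGroup p P) : ExponentAttained P := by
  have hp : p.Prime := Fact.out
  obtain ⟨n, hn⟩ := hP.exists_exponent_eq_pow
  obtain ⟨a, ha⟩ := hp.exists_orderOf_eq_pow_factorization_exponent P
  exact ⟨a, by rw [ha, hn, hp.factorization_pow, Finsupp.single_eq_same]⟩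

theorem exponentAttained_of_isNilpotent {G : Type*} [Group G] [Finite G]
    (hG : Group.IsNilpotent G) : ExponentAttained G := by
  obtain ⟨e⟩ := (Group.isNilpotent_of_finite_tfae.out 0 4).mp hG
  refine .of_mulEquiv (.pi fun p => .pi fun P => ?_) e
  have : Fact (p : ℕ).Prime := ⟨Nat.prime_of_mem_primeFactors p.2⟩
  exact exponentAttained_of_isPGroup P.isPGroup'

section

variable {G : Type*} [Group G]

theorem orderOf_eq_exponent_zpowers (a : G) :
    orderOf a = Monoid.exponent (Subgroup.zpowers a) := by
  rw [IsCyclic.exponent_eq_card, Nat.card_zpowers]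

theorem zpowers_eq_of_orderOf_eq_exponent {H : Subgroup G} [Finite H] [IsCyclic H] {a : G}
    (haH : a ∈ H) (ha : orderOf a = Monoid.exponent H) : Subgroup.zpowers a = H := by
  refine Subgroup.eq_of_le_of_card_ge ((Subgroup.zpowers_le).mpr haH) ?_
  rw [Nat.card_zpowers, ha, IsCyclic.exponent_eq_card]

variable (G) in
/-- The pairs `(H, a)` of a subgroup `H` and an element `a ∈ H` of order `exp H`, which `SG`
counts. -/
abbrev ExponentPair : Type _ :=
  Σ H : Subgroup G, {a : H // orderOf a = Monoid.exponent H}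

/-- The embedding `a ↦ (⟨a⟩, a)` of `G` into its `ExponentPair`s. -/
def zpowersPair (a : G) : ExponentPair G :=
  ⟨Subgroup.zpowers a, ⟨a, Subgroup.mem_zpowers a⟩, by
    rw [Subgroup.orderOf_mk, orderOf_eq_exponent_zpowers]⟩

theorem zpowersPair_injective : Function.Injective (zpowersPair (G := G)) :=
  Function.LeftInverse.injective (g := fun s => s.2.1) fun _ => rfl

theorem zpowersPair_surjective_iff [Finite G] :
    Function.Surjective (zpowersPair (G := G)) ↔
      ∀ H : Subgroup G, ExponentAttained H → IsCyclic H := by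
  constructor
  · rintro h H ⟨a, ha⟩
    obtain ⟨b, hb⟩ := h ⟨H, a, ha⟩
    exact H.isCyclic_iff_exists_zpowers_eq_top.mpr ⟨b, congrArg Sigma.fst hb⟩
  · rintro h ⟨H, ⟨a, haH⟩, ha⟩
    have : IsCyclic H := h H ⟨_, ha⟩
    rw [Subgroup.orderOf_mk] at ha
    obtain rfl := zpowers_eq_of_orderOf_eq_exponent haH ha
    exact ⟨a, rfl⟩

variable [Finite G]

variable (G) in
theorem SG_eq_card_exponentPair : SG G = Nat.card (ExponentPair G) := by
  have := Fintype.ofFinite (Subgroup G)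
  simp only [SG, phiG, finsum_eq_sum_of_fintype, Nat.card_sigma]

variable (G) in
theorem card_le_SG : Nat.card G ≤ SG G := by
  rw [SG_eq_card_exponentPair]
  exact Nat.card_le_card_of_injective zpowersPair zpowersPair_injective

theorem SG_eq_card_iff :
    SG G = Nat.card G ↔ ∀ H : Subgroup G, ExponentAttained H → IsCyclic H := by
  rw [← zpowersPair_surjective_iff, SG_eq_card_exponentPair]
  refine ⟨fun h => ?_, fun h => ?_⟩
  · exact ((Nat.bijective_iff_injective_and_card _).mpr ⟨zpowersPair_injective, h.symm⟩).2
  · exact (Nat.card_eq_of_bijective _ ⟨zpowersPair_injective, h⟩).symm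

end

theorem nilpotent_S_ge_card_and_eq_iff_cyclic_general (G : Type*) [Group G] [Finite G]
    (hG : ExponentAttained G) :
    SG G ≥ Nat.card G ∧ (SG G = Nat.card G ↔ IsCyclic G) := by
  refine ⟨card_le_SG G, SG_eq_card_iff.trans ⟨fun h => ?_, fun _ H _ => inferInstance⟩⟩
  have : IsCyclic (⊤ : Subgroup G) := h ⊤ (hG.of_mulEquiv Subgroup.topEquiv.symm)
  exact Subgroup.topEquiv.isCyclic.mp this

theorem nilpotent_S_ge_card_and_eq_iff_cyclic (G : Type*) [Group G] [Fintype G]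
    (hG : Group.IsNilpotent G) :
    SG G ≥ Nat.card G ∧ (SG G = Nat.card G ↔ IsCyclic G) :=
  nilpotent_S_ge_card_and_eq_iff_cyclic_general G (exponentAttained_of_isNilpotent hG)
end

section
/- If G is a finite group all of whose Sylow subgroups are cyclic, then S(G) = |G|. -/
/-! A finite group with cyclic Sylow subgroups has exponent equal to its order, so the elements
whose order is the exponent are exactly the generators of the group. The hypothesis passes to
subgroups, hence `SG G` counts each `g : G` once, at the unique subgroup that `g` generates. -/

theorem finsum_natCard_fiber {α β : Type*} [Finite α] (f : α → β) :
    ∑ᶠ b, Nat.card {a // f a = b} = Nat.card α := by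
  classical
  have := Fintype.ofFinite α
  have support_subset :
      (Function.support fun b ↦ Nat.card {a // f a = b}) ⊆ Finset.univ.image f := by
    intro b hb
    obtain ⟨⟨a, rfl⟩⟩ := (Nat.card_ne_zero.mp hb).1
    simp
  rw [finsum_eq_sum_of_support_subset _ support_subset, Nat.card_eq_fintype_card,
    ← Finset.card_univ, Finset.card_eq_sum_card_image f]
  simp only [Nat.card_eq_fintype_card, Fintype.card_subtype]

section

variable {G : Type*} [Group G]

theorem orderOf_eq_exponent_iff_zpowers_eq_top [Finite G] [IsZGroup G] {a : G} :
    orderOf a = Monoid.exponent G ↔ Subgroup.zpowers a = ⊤ := by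
  rw [IsZGroup.exponent_eq_card, ← Nat.card_zpowers, Subgroup.card_eq_iff_eq_top]

theorem zpowers_eq_top_iff_zpowers_coe_eq {H : Subgroup G} {a : H} :
    Subgroup.zpowers a = ⊤ ↔ Subgroup.zpowers (a : G) = H := by
  rw [← (Subgroup.map_injective H.subtype_injective).eq_iff, MonoidHom.map_zpowers,
    ← MonoidHom.range_eq_map, Subgroup.range_subtype, Subgroup.subtype_apply]

theorem phiG_subgroup_eq_card_zpowers_eq (H : Subgroup G) [Finite H] [IsZGroup H] :
    phiG H = Nat.card {g : G // Subgroup.zpowers g = H} := by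
  have mem_of_zpowers_eq {g : G} (hg : Subgroup.zpowers g = H) : g ∈ H :=
    hg ▸ Subgroup.mem_zpowers g
  calc
    phiG H = Nat.card {a : H // Subgroup.zpowers (a : G) = H} :=
      Nat.card_congr <| Equiv.subtypeEquivRight fun _ ↦
        orderOf_eq_exponent_iff_zpowers_eq_top.trans zpowers_eq_top_iff_zpowers_coe_eq
    _ = Nat.card {g : G // Subgroup.zpowers g = H} :=
      Nat.card_congr <| Equiv.subtypeSubtypeEquivSubtype mem_of_zpowers_eq

end

theorem S_eq_card_of_sylow_cyclic (G : Type*) [Group G] [Fintype G]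
    (h : ∀ (p : ℕ), p.Prime → ∀ P : Sylow p G, IsCyclic P) :
    SG G = Nat.card G := by
  have : IsZGroup G := ⟨h⟩
  calc
    SG G = ∑ᶠ H : Subgroup G, Nat.card {g : G // Subgroup.zpowers g = H} :=
      finsum_congr fun H ↦ phiG_subgroup_eq_card_zpowers_eq H
    _ = Nat.card G := finsum_natCard_fiber Subgroup.zpowers
end

section
/- If G is a finite group with all Sylow subgroups cyclic (a ZM-group), then for every subgroup H of G, φ(H) ≠ 0 if and only if H is cyclic. -/
theorem phiG_ne_zero_iff_exists_orderOf_eq_exponent (G : Type*) [Group G] [Finite G] :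
    phiG G ≠ 0 ↔ ∃ a : G, orderOf a = Monoid.exponent G := by
  rw [phiG, Nat.card_ne_zero, and_iff_left Subtype.finite, nonempty_subtype]

theorem phi_ne_zero_iff_cyclic_of_ZM_general (G : Type*) [Group G] [IsZGroup G]
    (H : Subgroup G) [Finite H] : phiG H ≠ 0 ↔ IsCyclic H := by
  rw [phiG_ne_zero_iff_exists_orderOf_eq_exponent, IsZGroup.exponent_eq_card,
    isCyclic_iff_exists_orderOf_eq_natCard]

theorem phi_ne_zero_iff_cyclic_of_ZM (G : Type*) [Group G] [Fintype G]
    (h : ∀ (p : ℕ), p.Prime → ∀ P : Sylow p G, IsCyclic P) :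
    ∀ H : Subgroup G, phiG H ≠ 0 ↔ IsCyclic H := by
  have : IsZGroup G := ⟨h⟩
  exact fun H ↦ phi_ne_zero_iff_cyclic_of_ZM_general G H
end
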